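/- Let $p$ be a prime and $F$ a field of characteristic $p$. In the cyclic algebra $A = [\alpha, \beta)_{p,F}$ generated by $x, y$ with $x^p - x = \alpha$, $y^p = \beta$, $yxy^{-1} = x + 1$, for each $j \in \{1, \dots, p-1\}$, every element $v \in F(x) y^j$ satisfies $v^p \in F$. -/

import Mathlib

/-!
Conjugation by `y` translates `x` by `1`, so moving the powers of `y` in `(f(x) yʲ)ᵖ` to the right
yields `N(f)(x) · yʲᵖ`, where `N(f)` is the product of the translates `f(X + jk)`, `0 ≤ k < p`.
As `j` is invertible modulo `p`, these are all the translates of `f` by the prime field, so `N(f)`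
is invariant under `X ↦ X + 1`. An invariant polynomial `g` takes the value `g(0)` on the whole
prime field, so `Xᵖ - X` divides `g - g(0)`; the quotient is again invariant, and by induction `g`
is a polynomial in `Xᵖ - X`, whose value at `x` is the scalar `α`.
-/

section ArtinSchreier

open Polynomial

section SemiconjBy

variable {R A : Type*} [CommSemiring R] [Semiring A] [Algebra R A]

theorem semiconjBy_aeval {z x x' : A} (h : SemiconjBy z x x') (f : R[X]) :
    SemiconjBy z (aeval x f) (aeval x' f) := by
  induction f using Polynomial.induction_on' with
  | add f g hf hg => simpa using hf.add_right hg
  | monomial n r =>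
    simpa [aeval_monomial] using
      SemiconjBy.mul_right (Algebra.commutes r z).symm (h.pow_right n)

theorem semiconjBy_pow_add_natCast_mul {y x r : A} (h : SemiconjBy y x (x + r))
    (hr : Commute y r) (n : ℕ) : SemiconjBy (y ^ n) x (x + n * r) := by
  induction n with
  | zero => simp
  | succ n ih =>
    rw [pow_succ']
    have hstep := (h.add_right ((Nat.commute_cast y n).mul_right hr)).mul_left ih
    simpa [add_mul, add_assoc, add_comm, add_left_comm] using hstep

theorem aeval_mul_pow_of_semiconjBy_add_algebraMap {z x : A} {r : R}
    (h : SemiconjBy z x (x + algebraMap R A r)) (f : R[X]) (n : ℕ) :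
    (aeval x f * z) ^ n =
      aeval x (∏ k ∈ Finset.range n, taylor (k * r) f) * z ^ n := by
  induction n with
  | zero => simp
  | succ n ih =>
    have hz : SemiconjBy (z ^ n) (aeval x f) (aeval x (taylor (n * r) f)) := by
      have hshift := semiconjBy_pow_add_natCast_mul h (Algebra.commutes r z).symm n
      simpa [taylor_apply, aeval_comp] using semiconjBy_aeval hshift f
    rw [pow_succ, ih, Finset.prod_range_succ, map_mul, mul_assoc, ← mul_assoc (z ^ n), hz.eq,
      mul_assoc, ← pow_succ, mul_assoc]

end SemiconjBy

section TranslationNorm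

variable {p : ℕ} [NeZero p] {R : Type*} [CommRing R]

variable (p) in
/-- The norm of `f` for the action of `ZMod p` on `R[X]` by translations, for `R` of characteristic
`p`. If `p` is prime, its value at the root `x` of `Xᵖ - X - α` is the norm of `f(x)` in the
Artin–Schreier extension `R[X] / (Xᵖ - X - α)`. -/
noncomputable def translationNorm (f : R[X]) : R[X] :=
  ∏ a : ZMod p, taylor (a.cast : R) f

variable [CharP R p]

theorem taylor_one_translationNorm (f : R[X]) :
    taylor 1 (translationNorm p f) = translationNorm p f := by
  calc
    taylor 1 (translationNorm p f) = ∏ a : ZMod p, taylor 1 (taylor (a.cast : R) f) :=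
      map_prod (taylorAlgHom (1 : R)) _ _
    _ = translationNorm p f :=
      Fintype.prod_equiv (Equiv.addLeft 1) _ _ fun a => by simp [taylor_taylor]

theorem prod_range_taylor_natCast_mul_of_coprime {j : ℕ} (hj : j.Coprime p) (f : R[X]) :
    ∏ k ∈ Finset.range p, taylor ((k : R) * j) f = translationNorm p f := by
  calc
    ∏ k ∈ Finset.range p, taylor ((k : R) * j) f
      = ∏ a : ZMod p, taylor ((a.cast : R) * j) f :=
        Finset.prod_nbij' (fun k => (k : ZMod p)) ZMod.val (by simp)
          (fun a _ => Finset.mem_range.mpr a.val_lt)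
          (fun k hk => ZMod.val_cast_of_lt (Finset.mem_range.mp hk)) (by simp) (by simp)
    _ = translationNorm p f :=
        Fintype.prod_equiv (ZMod.unitOfCoprime j hj).mulRight _ _ fun a => by simp

theorem aeval_mul_pow_pow_eq_aeval_translationNorm_mul {A : Type*} [Ring A] [Algebra R A] {x y : A}
    (hxy : SemiconjBy y x (x + 1)) {j : ℕ} (hj : j.Coprime p) (f : R[X]) :
    (aeval x f * y ^ j) ^ p = aeval x (translationNorm p f) * (y ^ j) ^ p := by
  have hyj : SemiconjBy (y ^ j) x (x + algebraMap R A j) := by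
    simpa using semiconjBy_pow_add_natCast_mul hxy (Commute.one_right y) j
  rw [aeval_mul_pow_of_semiconjBy_add_algebraMap hyj, prod_range_taylor_natCast_mul_of_coprime hj]

end TranslationNorm

section InvariantPolynomials

theorem isMonicOfDegree_X_pow_sub_X {S : Type*} [Ring S] [Nontrivial S] {n : ℕ} (hn : 1 < n) :
    IsMonicOfDegree (X ^ n - X : S[X]) n :=
  (isMonicOfDegree_X_pow S n).sub (natDegree_X.trans_lt hn)

theorem periodic_eval_of_taylor_eq_self {S : Type*} [CommSemiring S] {r : S} {g : S[X]}
    (hg : taylor r g = g) : Function.Periodic (fun s => g.eval s) r :=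
  fun s => by simp only [← taylor_eval, hg]

variable {p : ℕ} [Fact p.Prime] {R : Type*} [CommRing R] [CharP R p]

theorem X_pow_char_sub_X_eq_prod :
    (X ^ p - X : R[X]) = ∏ a : ZMod p, (X - C (a.cast : R)) := by
  have hzmod : ∏ a : ZMod p, (X - C a) = X ^ p - X := by
    have hroots := FiniteField.roots_X_pow_card_sub_X (ZMod p)
    rw [ZMod.card] at hroots
    have hmonic : IsMonicOfDegree (X ^ p - X : (ZMod p)[X]) p :=
      isMonicOfDegree_X_pow_sub_X (Nat.Prime.one_lt Fact.out)
    have hcard : (X ^ p - X : (ZMod p)[X]).roots.card = (X ^ p - X : (ZMod p)[X]).natDegree := by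
      rw [hroots, hmonic.natDegree_eq, Finset.card_val, Finset.card_univ, ZMod.card]
    simpa [hroots] using prod_multiset_X_sub_C_of_monic_of_roots_card_eq hmonic.monic hcard
  simpa [Polynomial.map_prod] using
    (congrArg (Polynomial.map (ZMod.castHom dvd_rfl R)) hzmod).symm

theorem taylor_one_X_pow_char_sub_X : taylor (1 : R) (X ^ p - X) = X ^ p - X := by
  rw [map_sub, taylor_X_pow, taylor_X, add_pow_char, ← C_pow, one_pow]
  ring

theorem X_pow_char_sub_X_dvd_sub_C_of_taylor_one_eq_self {g : R[X]} (hg : taylor 1 g = g) :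
    X ^ p - X ∣ g - C (g.eval 0) := by
  rw [X_pow_char_sub_X_eq_prod]
  refine Fintype.prod_dvd_of_coprime (fun a b hab => ?_) fun a => ?_
  · apply isCoprime_X_sub_C_of_isUnit_sub
    simpa using (sub_ne_zero.mpr hab).isUnit.map (ZMod.castHom dvd_rfl R)
  · have heval : g.eval (a.val : R) = g.eval 0 := by
      simpa using (periodic_eval_of_taylor_eq_self hg).nat_mul_eq a.val
    rw [dvd_iff_isRoot, IsRoot, eval_sub, eval_C, sub_eq_zero, ← heval, ZMod.natCast_val]

theorem exists_X_pow_char_sub_X_mul_add_C_of_taylor_one_eq_self {g : R[X]}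
    (hg : taylor 1 g = g) :
    ∃ (q : R[X]) (c : R), taylor 1 q = q ∧ (X ^ p - X) * q + C c = g := by
  obtain ⟨q, hq⟩ := X_pow_char_sub_X_dvd_sub_C_of_taylor_one_eq_self (p := p) hg
  have hp : 1 < p := Nat.Prime.one_lt Fact.out
  have : Nontrivial R := CharP.nontrivial_of_char_ne_one hp.ne'
  refine ⟨q, g.eval 0, (isMonicOfDegree_X_pow_sub_X hp).monic.isRegular.left ?_,
    by rw [← hq, sub_add_cancel]⟩
  calc
    (X ^ p - X) * taylor 1 q = taylor 1 ((X ^ p - X) * q) := by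
      rw [taylor_mul, taylor_one_X_pow_char_sub_X]
    _ = (X ^ p - X) * q := by rw [← hq, map_sub, taylor_C, hg]

theorem exists_comp_X_pow_char_sub_X_of_taylor_one_eq_self {g : R[X]} (hg : taylor 1 g = g) :
    ∃ h : R[X], h.comp (X ^ p - X) = g := by
  have hp : 1 < p := Nat.Prime.one_lt Fact.out
  have : Nontrivial R := CharP.nontrivial_of_char_ne_one hp.ne'
  induction hn : g.natDegree using Nat.strong_induction_on generalizing g with
  | _ n ih =>
    obtain ⟨q, c, hq, rfl⟩ :=
      exists_X_pow_char_sub_X_mul_add_C_of_taylor_one_eq_self (p := p) hg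
    rcases eq_or_ne q 0 with rfl | hq0
    · exact ⟨C c, by simp⟩
    have hdeg : q.natDegree < n := by
      have hmonic : IsMonicOfDegree (X ^ p - X : R[X]) p := isMonicOfDegree_X_pow_sub_X hp
      rw [← hn, natDegree_add_C, hmonic.monic.natDegree_mul' hq0, hmonic.natDegree_eq]
      exact Nat.lt_add_of_pos_left hp.pos
    obtain ⟨h, hh⟩ := ih _ hdeg hq rfl
    exact ⟨X * h + C c, by rw [add_comp, mul_comp, X_comp, C_comp, hh]⟩

theorem aeval_mem_range_algebraMap_of_taylor_one_eq_self {A : Type*} [Ring A] [Algebra R A]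
    {α : R} {x : A} (hx : x ^ p - x = algebraMap R A α) {g : R[X]} (hg : taylor 1 g = g) :
    aeval x g ∈ (algebraMap R A).range := by
  obtain ⟨h, rfl⟩ := exists_comp_X_pow_char_sub_X_of_taylor_one_eq_self (p := p) hg
  refine ⟨h.eval α, ?_⟩
  rw [aeval_comp, map_sub, map_pow, aeval_X, hx, aeval_algebraMap_apply, coe_aeval_eq_eval]

end InvariantPolynomials

theorem pow_p_mem_base_of_mem_Fx_yj_general {p : ℕ} [Fact p.Prime] {R A : Type*} [CommRing R]
    [CharP R p] [Ring A] [Algebra R A] {α β : R} {x y : A}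
    (hx : x ^ p - x = algebraMap R A α) (hy : y ^ p = algebraMap R A β)
    (hxy : SemiconjBy y x (x + 1)) {j : ℕ} (hj : ¬p ∣ j) {v : A}
    (hv : v ∈ Algebra.adjoin R {x}) : (v * y ^ j) ^ p ∈ (algebraMap R A).range := by
  obtain ⟨f, rfl⟩ := Algebra.adjoin_mem_exists_aeval R x hv
  have hjp : j.Coprime p := ((Fact.out : p.Prime).coprime_iff_not_dvd.mpr hj).symm
  have hyj : (y ^ j) ^ p = algebraMap R A (β ^ j) := by rw [pow_right_comm, hy, map_pow]
  rw [aeval_mul_pow_pow_eq_aeval_translationNorm_mul hxy hjp, hyj]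
  exact mul_mem
    (aeval_mem_range_algebraMap_of_taylor_one_eq_self hx (taylor_one_translationNorm f)) ⟨_, rfl⟩

end ArtinSchreier

/-- Let `p` be a prime and `F` a field of characteristic `p`. In the cyclic algebra
`A = [α, β)_{p,F}` generated by `x, y` with `x^p - x = α`, `y^p = β`, `y x y⁻¹ = x + 1`
(`β ≠ 0`, so `y` is a unit, and the relation reads `y * x = (x + 1) * y`), for every
`j ∈ {1, …, p-1}`, every element `v ∈ F(x)·yʲ` satisfies `v^p ∈ F`. -/
theorem pow_p_mem_base_of_mem_Fx_yj (p : ℕ) (hp : p.Prime) (F : Type*) [Field F]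
    [CharP F p] (α β : F) (hβ : β ≠ 0) (A : Type*) [Ring A] [Algebra F A]
    (hdim : Module.finrank F A = p ^ 2) (x y : A)
    (hx : x ^ p - x = algebraMap F A α) (hy : y ^ p = algebraMap F A β)
    (hu : IsUnit y) (hcomm : y * x = (x + 1) * y) :
    ∀ j : ℕ, 1 ≤ j → j ≤ p - 1 → ∀ c : Fin p → F,
      ((∑ i : Fin p, algebraMap F A (c i) * x ^ (i : ℕ)) * y ^ j) ^ p ∈
        (algebraMap F A).range := by
  have : Fact p.Prime := ⟨hp⟩
  intro j hj hjp c
  have hpj : ¬p ∣ j := Nat.not_dvd_of_pos_of_lt hj (Nat.lt_of_le_sub_one hp.pos hjp)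
  exact pow_p_mem_base_of_mem_Fx_yj_general hx hy hcomm hpj <| sum_mem fun i _ =>
    mul_mem (algebraMap_mem _ _) (pow_mem (Algebra.self_mem_adjoin_singleton F x) i)
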